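/- Let k be a positive integer and let C be a self-dual Z4-code of length 24k whose minimum Lee weight d_L(C) equals 8k+4 or 8k+2. Then the residue code C^(1) is a binary extremal doubly even self-dual code of length 24k, i.e., C^(1) equals its own dual, every codeword of C^(1) has Hamming weight divisible by 4, and the minimum Hamming weight of C^(1) is 4k+4. -/

import Mathlib

open Finset

namespace Z4Note

variable {ι : Type*} [Fintype ι]

/-- Hamming weight of a binary vector. -/
def hWt (x : ι → ZMod 2) : ℕ := (Finset.univ.filter fun i => x i ≠ 0).card

/-- Lee value of an element of `ZMod 4`:  0 ↦ 0, 1 ↦ 1, 2 ↦ 2, 3 ↦ 1. -/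
def leeVal (a : ZMod 4) : ℕ := min a.val (4 - a.val)

/-- Lee weight `n₁(x) + 2 n₂(x) + n₃(x)`. -/
def leeWt (x : ι → ZMod 4) : ℕ := ∑ i, leeVal (x i)

/-- Euclidean weight `n₁(x) + 4 n₂(x) + n₃(x)`. -/
def eucWt (x : ι → ZMod 4) : ℕ := ∑ i, (leeVal (x i)) ^ 2

/-- Number of coordinates of `x` equal to `a`. -/
def nCount (a : ZMod 4) (x : ι → ZMod 4) : ℕ := (Finset.univ.filter fun i => x i = a).card

/-- Dual of a `ZMod 4`-code (as a set), w.r.t. the standard inner product. -/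
def dualZ4 (C : Set (ι → ZMod 4)) : Set (ι → ZMod 4) :=
  {x | ∀ y ∈ C, ∑ i, x i * y i = 0}

/-- Dual of a binary code (as a set), w.r.t. the standard inner product. -/
def dual2 (C : Set (ι → ZMod 2)) : Set (ι → ZMod 2) :=
  {x | ∀ y ∈ C, ∑ i, x i * y i = 0}

/-- A `ZMod 4`-code is self-dual if it equals its dual. -/
def SelfDualZ4 (C : Submodule (ZMod 4) (ι → ZMod 4)) : Prop :=
  (C : Set (ι → ZMod 4)) = dualZ4 (C : Set (ι → ZMod 4))

/-- A binary code is self-dual if it equals its dual. -/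
def SelfDual2 (D : Submodule (ZMod 2) (ι → ZMod 2)) : Prop :=
  (D : Set (ι → ZMod 2)) = dual2 (D : Set (ι → ZMod 2))

/-- Coordinatewise reduction modulo 2. -/
def res2 (x : ι → ZMod 4) : ι → ZMod 2 :=
  fun i => ZMod.castHom (by norm_num : (2:ℕ) ∣ 4) (ZMod 2) (x i)

/-- The residue code `C⁽¹⁾ = {c mod 2 : c ∈ C}`. -/
def residue (C : Set (ι → ZMod 4)) : Set (ι → ZMod 2) := res2 '' C

/-- Minimum Lee weight among nonzero codewords. -/
noncomputable def minLee (C : Set (ι → ZMod 4)) : ℕ := sInf {d | ∃ x ∈ C, x ≠ 0 ∧ leeWt x = d}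

/-- Minimum Euclidean weight among nonzero codewords. -/
noncomputable def minEuc (C : Set (ι → ZMod 4)) : ℕ := sInf {d | ∃ x ∈ C, x ≠ 0 ∧ eucWt x = d}

/-- Minimum Hamming weight among nonzero codewords of a binary code. -/
noncomputable def minHam (C : Set (ι → ZMod 2)) : ℕ := sInf {d | ∃ x ∈ C, x ≠ 0 ∧ hWt x = d}

/-- A binary code is doubly even if all weights are divisible by 4. -/
def DoublyEven (C : Set (ι → ZMod 2)) : Prop := ∀ x ∈ C, 4 ∣ hWt x

/-- A binary code is singly even if some codeword has weight not divisible by 4. -/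
def SinglyEven (C : Set (ι → ZMod 2)) : Prop := ∃ x ∈ C, ¬ 4 ∣ hWt x

/-- A self-dual `ZMod 4`-code is Type II if all Euclidean weights are divisible by 8. -/
def TypeII (C : Set (ι → ZMod 4)) : Prop := ∀ x ∈ C, 8 ∣ eucWt x

/-- The doubly even subcode of a binary code. -/
def evenSubcode (D : Set (ι → ZMod 2)) : Set (ι → ZMod 2) := {x ∈ D | 4 ∣ hWt x}

/-- The shadow `S = D₀^⊥ \ D` of a binary code. -/
def shadow (D : Set (ι → ZMod 2)) : Set (ι → ZMod 2) := dual2 (evenSubcode D) \ D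

/-- A binary singly even self-dual code is s-extremal if equality holds in the
Bachoc–Gaborit bound relating the minimum weight of the code and of its shadow. -/
def SExtremal (D : Submodule (ZMod 2) (ι → ZMod 2)) : Prop :=
  SelfDual2 D ∧ SinglyEven (D : Set (ι → ZMod 2)) ∧
  ((¬ (Fintype.card ι % 24 = 22 ∧
        minHam (D : Set (ι → ZMod 2)) = 4 * (Fintype.card ι / 24) + 6)) →
      minHam (shadow (D : Set (ι → ZMod 2))) + 2 * minHam (D : Set (ι → ZMod 2)) =
        Fintype.card ι / 2 + 4) ∧
  ((Fintype.card ι % 24 = 22 ∧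
        minHam (D : Set (ι → ZMod 2)) = 4 * (Fintype.card ι / 24) + 6) →
      minHam (shadow (D : Set (ι → ZMod 2))) + 2 * minHam (D : Set (ι → ZMod 2)) =
        Fintype.card ι / 2 + 8)

/-- Equivalence of `ZMod 4`-codes: coordinate permutation together with sign changes. -/
def Z4Equiv (C C' : Set (ι → ZMod 4)) : Prop :=
  ∃ σ : Equiv.Perm ι, ∃ ε : ι → ZMod 4, (∀ i, ε i = 1 ∨ ε i = -1) ∧
    C' = (fun x => fun i => ε i * x (σ i)) '' C

/-- Covering radius of a binary code. -/
noncomputable def covRad (C : Set (ι → ZMod 2)) : ℕ :=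
  sInf {R | ∀ v : ι → ZMod 2, ∃ c ∈ C, hWt (v - c) ≤ R}

/-- Entry `(i,j)` of the circulant matrix with first row `r`. -/
def circEntry {m : ℕ} (r : Fin m → ZMod 4) (i j : Fin m) : ZMod 4 := r (j - i)

/-- Entry `(i,j)` of the negacirculant matrix with first row `r`. -/
def negaEntry {m : ℕ} (r : Fin m → ZMod 4) (i j : Fin m) : ZMod 4 :=
  if i.val ≤ j.val then r (j - i) else - r (j - i)

/-- The bordered part `B` of the generator matrix of a bordered double circulant code. -/
def bdcB {m : ℕ} (α β γ : ZMod 4) (r : Fin m → ZMod 4) :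
    Fin (m+1) → Fin (m+1) → ZMod 4 :=
  Fin.cases (Fin.cases α fun _ => β) (fun i' => Fin.cases γ fun j' => circEntry r i' j')

/-- Row `i` of the generator matrix `(I | B)` of a bordered double circulant code. -/
def bdcRow {m : ℕ} (α β γ : ZMod 4) (r : Fin m → ZMod 4) (i : Fin (m+1)) :
    (Fin (m+1) ⊕ Fin (m+1)) → ZMod 4 :=
  Sum.elim (fun j => if j = i then 1 else 0) (bdcB α β γ r i)

/-- The bordered double circulant code of length `2(m+1)`. -/
def bdcCode {m : ℕ} (α β γ : ZMod 4) (r : Fin m → ZMod 4) :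
    Submodule (ZMod 4) ((Fin (m+1) ⊕ Fin (m+1)) → ZMod 4) :=
  Submodule.span (ZMod 4) (Set.range (bdcRow α β γ r))

/-- The block matrix `[[A, B], [-Bᵀ, Aᵀ]]` built from negacirculant `A`, `B`. -/
def fourNegaM {n : ℕ} (a b : Fin n → ZMod 4) :
    (Fin n ⊕ Fin n) → (Fin n ⊕ Fin n) → ZMod 4
  | Sum.inl i, Sum.inl j => negaEntry a i j
  | Sum.inl i, Sum.inr j => negaEntry b i j
  | Sum.inr i, Sum.inl j => - negaEntry b j i
  | Sum.inr i, Sum.inr j => negaEntry a j i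

/-- Row `i` of the generator matrix `(I | M)` of a four-negacirculant code. -/
def fourNegaRow {n : ℕ} (a b : Fin n → ZMod 4) (i : Fin n ⊕ Fin n) :
    ((Fin n ⊕ Fin n) ⊕ (Fin n ⊕ Fin n)) → ZMod 4 :=
  Sum.elim (fun j => if j = i then 1 else 0) (fourNegaM a b i)

/-- The four-negacirculant code of length `4n`. -/
def fourNegaCode {n : ℕ} (a b : Fin n → ZMod 4) :
    Submodule (ZMod 4) (((Fin n ⊕ Fin n) ⊕ (Fin n ⊕ Fin n)) → ZMod 4) :=
  Submodule.span (ZMod 4) (Set.range (fourNegaRow a b))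


/-- The sign character of `ZMod 2`. -/
def sgn (a : ZMod 2) : ℚ := if a = 0 then 1 else -1

theorem sgn_add (a b : ZMod 2) : sgn (a + b) = sgn a * sgn b := by
  rcases (show a = 0 ∨ a = 1 by revert a; decide) with rfl | rfl <;>
  rcases (show b = 0 ∨ b = 1 by revert b; decide) with rfl | rfl <;>
  simp [sgn, show (1 : ZMod 2) + 1 = 0 by decide]

theorem sgn_sum {α : Type*} (s : Finset α) (f : α → ZMod 2) :
    sgn (∑ i ∈ s, f i) = ∏ i ∈ s, sgn (f i) := by
  classical
  induction s using Finset.induction_on with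
  | empty => simp [sgn]
  | insert a s ha ih => rw [Finset.sum_insert ha, Finset.prod_insert ha, sgn_add, ih]

open scoped Classical in
theorem sgn_orth {n : ℕ} (B : Submodule (ZMod 2) (Fin n → ZMod 2)) (u : Fin n → ZMod 2) :
    ∑ c ∈ univ.filter (· ∈ B), sgn (∑ i, u i * c i) =
      if u ∈ dual2 (B : Set (Fin n → ZMod 2)) then ((univ.filter (· ∈ B)).card : ℚ) else 0 := by
  split_ifs with h
  · rw [Finset.card_eq_sum_ones]
    push_cast
    apply Finset.sum_congr rfl
    intro c hc
    rw [h c (by simpa using hc)]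
    simp [sgn]
  · simp only [dual2, Set.mem_ofPred_eq, not_forall] at h
    obtain ⟨y, hy, hyu⟩ := h
    have hs : sgn (∑ i, u i * y i) = -1 := by simp [sgn, hyu]
    have h2 : ∑ c ∈ univ.filter (· ∈ B), sgn (∑ i, u i * c i) =
        ∑ c ∈ univ.filter (· ∈ B), - sgn (∑ i, u i * c i) := by
      apply Finset.sum_bij (fun c _ => c + y)
      · intro c hc
        simp only [mem_filter, mem_univ, true_and] at hc ⊢
        exact B.add_mem hc hy
      · intro a _ b _ hab
        exact add_right_cancel hab
      · intro c hc
        refine ⟨c - y, ?_, by simp⟩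
        simp only [mem_filter, mem_univ, true_and] at hc ⊢
        exact B.sub_mem hc hy
      · intro c hc
        simp only [Pi.add_apply, mul_add, Finset.sum_add_distrib, sgn_add, hs]
        ring
    rw [Finset.sum_neg_distrib] at h2
    linarith

theorem prod_hWt {n : ℕ} {R : Type*} [CommRing R] (x y : R) (u : Fin n → ZMod 2) :
    ∏ i, (if u i = 0 then x else y) = x ^ (n - hWt u) * y ^ (hWt u) := by
  rw [Finset.prod_ite, Finset.prod_const, Finset.prod_const]
  have h := Finset.card_filter_add_card_filter_not (s := (univ : Finset (Fin n))) (fun i => u i = 0)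
  rw [Finset.card_univ, Fintype.card_fin] at h
  have h' : hWt u = (univ.filter fun i => ¬ u i = 0).card := rfl
  rw [h']
  congr 2
  omega

open scoped Classical in
open Polynomial in
/-- MacWilliams identity, specialised. -/
theorem macw {n : ℕ} (B : Submodule (ZMod 2) (Fin n → ZMod 2)) :
    (2 : ℚ[X]) ^ n * ∑ c ∈ univ.filter (· ∈ B), X ^ hWt c =
      C ((univ.filter (· ∈ B)).card : ℚ) *
        ∑ u ∈ univ.filter (· ∈ dual2 (B : Set (Fin n → ZMod 2))),
          (1 + X) ^ (n - hWt u) * (1 - X) ^ hWt u := by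
  have h1 : ∀ c : Fin n → ZMod 2, (2 : ℚ[X]) ^ n * X ^ hWt c =
      ∑ u : Fin n → ZMod 2, C (sgn (∑ i, u i * c i)) * ((1 + X) ^ (n - hWt u) * (1 - X) ^ hWt u) := by
    intro c
    have e1 : (2 : ℚ[X]) ^ n * X ^ hWt c = ∏ i, (if c i = 0 then 2 else 2 * X) := by
      rw [prod_hWt, mul_pow, ← mul_assoc, ← pow_add]
      congr 2
      have : hWt c ≤ n := by
        unfold hWt
        refine le_trans (Finset.card_le_univ _) (by simp)
      omega
    have e2 : ∀ i, (if c i = 0 then (2 : ℚ[X]) else 2 * X) =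
        ∑ b : ZMod 2, C (sgn (b * c i)) * (if b = 0 then 1 + X else 1 - X) := by
      intro i
      have hu : (univ : Finset (ZMod 2)) = {0, 1} := rfl
      rw [hu, Finset.sum_pair (by decide)]
      generalize c i = b
      rcases (show b = 0 ∨ b = 1 by revert b; decide) with rfl | rfl
      · simp [sgn]; ring
      · simp [sgn]; ring
    rw [e1, Finset.prod_congr rfl (fun i _ => e2 i), Finset.prod_univ_sum]
    rw [Fintype.piFinset_univ]
    apply Finset.sum_congr rfl
    intro u _
    rw [Finset.prod_mul_distrib, prod_hWt, sgn_sum, map_prod]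
  rw [Finset.mul_sum, Finset.sum_congr rfl (fun c _ => h1 c), Finset.sum_comm, Finset.mul_sum,
    Finset.sum_filter]
  apply Finset.sum_congr rfl
  intro u _
  rw [← Finset.sum_mul, ← map_sum, sgn_orth]
  split_ifs <;> simp

open scoped Classical in
theorem card_mul_dual {n : ℕ} (B : Submodule (ZMod 2) (Fin n → ZMod 2)) :
    (2 : ℚ) ^ n = ((univ.filter (· ∈ B)).card : ℚ) *
      ((univ.filter (· ∈ dual2 (B : Set (Fin n → ZMod 2)))).card : ℚ) := by
  have h : ∑ u : Fin n → ZMod 2, ∑ c ∈ univ.filter (· ∈ B), sgn (∑ i, u i * c i) =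
     ((univ.filter (· ∈ B)).card : ℚ) *
      ((univ.filter (· ∈ dual2 (B : Set (Fin n → ZMod 2)))).card : ℚ) := by
    rw [Finset.sum_congr rfl (fun u _ => sgn_orth B u), ← Finset.sum_filter, Finset.sum_const,
      nsmul_eq_mul, mul_comm]
  rw [← h]
  have h2 := congrArg (Polynomial.eval 0) (macw B)
  simp only [Polynomial.eval_mul, Polynomial.eval_finsetSum, Polynomial.eval_pow,
    Polynomial.eval_X, Polynomial.eval_C, Polynomial.eval_add, Polynomial.eval_sub,
    Polynomial.eval_one, Polynomial.eval_ofNat] at h2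
  rw [h]
  simp only [add_zero, sub_zero, one_pow, mul_one, Finset.sum_const, nsmul_eq_mul] at h2
  rw [← h2, Finset.sum_eq_single 0]
  · simp [hWt]
  · intro b _ hb
    apply zero_pow
    intro hw
    apply hb
    unfold hWt at hw
    rw [Finset.card_eq_zero, Finset.filter_eq_empty_iff] at hw
    funext i
    simpa using hw (mem_univ i)
  · simp
open Polynomial in
/-- A polynomial with a root of high multiplicity at one has many monomials. -/
theorem eq_zero_of_sparse (m : ℕ) : ∀ p : ℚ[X], (X - 1) ^ m ∣ p → p.support.card ≤ m → p = 0 := by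
  induction m with
  | zero =>
    intro p _ h
    simpa using h
  | succ m ih =>
    intro p hp hc
    by_contra hne
    -- factor out the power of X
    obtain ⟨q, hq⟩ : X ^ p.natTrailingDegree ∣ p := by
      rw [X_pow_dvd_iff]
      intro d hd
      exact coeff_eq_zero_of_lt_natTrailingDegree hd
    have hq0 : q.coeff 0 ≠ 0 := by
      have h1 : p.coeff p.natTrailingDegree ≠ 0 := by
        simpa [trailingCoeff] using (trailingCoeff_nonzero_iff_nonzero.mpr hne)
      intro h
      apply h1
      have := coeff_X_pow_mul q p.natTrailingDegree 0
      rw [zero_add, ← hq] at this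
      rw [this, h]
    have hcop : IsCoprime ((X - 1 : ℚ[X]) ^ (m+1)) (X ^ p.natTrailingDegree) := by
      apply IsCoprime.pow
      exact ⟨-1, 1, by ring⟩
    have hdq : (X - 1 : ℚ[X]) ^ (m+1) ∣ q := by
      apply hcop.dvd_of_dvd_mul_left
      rw [← hq]; exact hp
    have hcq : q.support.card ≤ m + 1 := by
      refine le_trans ?_ hc
      rw [← Finset.card_map (addRightEmbedding p.natTrailingDegree)]
      apply Finset.card_le_card
      intro i hi
      simp only [Finset.mem_map, mem_support_iff, addRightEmbedding_apply] at hi ⊢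
      obtain ⟨j, hj, rfl⟩ := hi
      rw [hq, coeff_X_pow_mul']
      rw [← hq]
      simpa using hj
    have hd : derivative q = 0 := by
      apply ih
      · obtain ⟨r, hr⟩ := hdq
        rw [hr]
        refine ⟨((m : ℚ[X]) + 1) * r + (X - 1) * derivative r, ?_⟩
        rw [derivative_mul, derivative_pow]
        simp
        ring
      · have : (derivative q).support.card ≤ (q.support.erase 0).card := by
          rw [← Finset.card_map (addRightEmbedding 1)]
          apply Finset.card_le_card
          intro i hi
          simp only [Finset.mem_map, mem_support_iff, addRightEmbedding_apply] at hi
          obtain ⟨j, hj, rfl⟩ := hi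
          simp only [mem_erase, mem_support_iff]
          refine ⟨by omega, fun h => hj ?_⟩
          rw [coeff_derivative, h, zero_mul]
        have h0 : 0 ∈ q.support := by simpa using hq0
        rw [Finset.card_erase_of_mem h0] at this
        omega
    have hqc : q = C (q.coeff 0) := eq_C_of_derivative_eq_zero hd
    have : q.eval 1 = 0 := by
      obtain ⟨r, hr⟩ := hdq
      rw [hr]; simp
    rw [hqc] at this
    simp at this
    exact hq0 this

open Polynomial in
/-- `1 + 14 z + z²`. -/
noncomputable def gPhi : ℚ[X] := 1 + 14 * X + X ^ 2

open Polynomial in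
/-- `z (1 - z)⁴`. -/
noncomputable def gDel : ℚ[X] := X * (1 - X) ^ 4

open Polynomial in
/-- Combination of the Gleason generators. -/
noncomputable def gW (k : ℕ) (a : ℕ → ℚ) (m : ℕ) : ℚ[X] :=
  ∑ r ∈ range m, C (a r) * ((gPhi ^ 3) ^ (k - r) * gDel ^ r)

open Polynomial in
theorem exists_gW (k : ℕ) (m : ℕ) : ∃ a : ℕ → ℚ, X ^ m ∣ gW k a m - 1 := by
  induction m with
  | zero => exact ⟨0, by simp⟩
  | succ m ih =>
    obtain ⟨a, V, hV⟩ := ih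
    refine ⟨Function.update a m (- V.coeff 0), ?_⟩
    have h1 : gW k (Function.update a m (- V.coeff 0)) (m+1) = gW k a m + C (- V.coeff 0) * ((gPhi ^ 3) ^ (k - m) * gDel ^ m) := by
      unfold gW
      rw [Finset.sum_range_succ]
      congr 1
      · apply Finset.sum_congr rfl
        intro r hr
        rw [Function.update_of_ne (by simp at hr; omega)]
      · simp
    have h2 : gW k (Function.update a m (- V.coeff 0)) (m+1) - 1 = X ^ m * (V - C (V.coeff 0) * ((gPhi ^ 3) ^ (k - m) * ((1 - X) ^ 4) ^ m)) := by
      have : gW k a m = 1 + X ^ m * V := by rw [← hV]; ring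
      rw [h1, this, gDel, mul_pow, C_neg]
      ring
    rw [h2, pow_succ]
    apply mul_dvd_mul_left
    rw [X_dvd_iff]
    simp [coeff_zero_eq_eval_zero, gPhi]

open Polynomial in
theorem gW_reflect (k : ℕ) (a : ℕ → ℚ) : reflect (6 * k) (gW k a (k+1)) = gW k a (k+1) := by
  have hPhi : ∀ j, reflect (6 * j) ((gPhi ^ 3) ^ j) = (gPhi ^ 3) ^ j := by
    have d1 : gPhi.natDegree ≤ 2 := by unfold gPhi; compute_degree
    have r1 : reflect 2 gPhi = gPhi := by
      unfold gPhi
      ext i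
      rw [coeff_reflect]
      by_cases hi : i ≤ 2
      · rw [revAt_le hi]
        interval_cases i <;> simp [coeff_X, coeff_one, coeff_ofNat_mul, coeff_X_pow]
      · rw [revAt_eq_self_of_lt (by omega)]
    have r3 : reflect 6 (gPhi ^ 3) = gPhi ^ 3 := by
      have h2 : reflect (2 + 2) (gPhi * gPhi) = gPhi * gPhi := by
        rw [reflect_mul _ _ d1 d1, r1]
      have h3 : reflect ((2 + 2) + 2) (gPhi * gPhi * gPhi) = gPhi * gPhi * gPhi := by
        rw [reflect_mul _ _ (natDegree_mul_le_of_le d1 d1) d1, r1, h2]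
      rw [show gPhi ^ 3 = gPhi * gPhi * gPhi by ring]
      exact h3
    have d3 : (gPhi ^ 3).natDegree ≤ 6 := le_trans natDegree_pow_le (by omega)
    intro j
    induction j with
    | zero => simp
    | succ j ih =>
      rw [pow_succ, mul_add, mul_one, reflect_mul _ _ (le_trans natDegree_pow_le (by nlinarith)) d3, ih, r3]
  have hDel : ∀ j, reflect (6 * j) (gDel ^ j) = gDel ^ j := by
    have d1 : gDel.natDegree ≤ 6 := by unfold gDel; compute_degree; omega
    have r1 : reflect 6 gDel = gDel := by
      have : gDel = X - 4 * X ^ 2 + 6 * X ^ 3 - 4 * X ^ 4 + X ^ 5 := by unfold gDel; ring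
      rw [this]
      ext i
      rw [coeff_reflect]
      by_cases hi : i ≤ 6
      · rw [revAt_le hi]
        interval_cases i <;> simp [coeff_X, coeff_ofNat_mul, coeff_X_pow]
      · rw [revAt_eq_self_of_lt (by omega)]
    intro j
    induction j with
    | zero => simp
    | succ j ih =>
      rw [pow_succ, mul_add, mul_one, reflect_mul _ _ (le_trans natDegree_pow_le (by nlinarith)) d1, ih, r1]
  have dP : ∀ j, ((gPhi ^ 3) ^ j).natDegree ≤ 6 * j := by
    have d1 : gPhi.natDegree ≤ 2 := by unfold gPhi; compute_degree
    intro j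
    rw [← pow_mul]
    exact le_trans natDegree_pow_le (by nlinarith)
  have dD : ∀ j, (gDel ^ j).natDegree ≤ 6 * j := by
    have d1 : gDel.natDegree ≤ 6 := by unfold gDel; compute_degree; omega
    intro j
    exact le_trans natDegree_pow_le (by nlinarith)
  have key : ∀ m, m ≤ k + 1 → reflect (6 * k) (gW k a m) = gW k a m := by
    intro m
    induction m with
    | zero => intro _; simp [gW]
    | succ m ih =>
      intro hm
      have e : gW k a (m+1) = gW k a m + C (a m) * ((gPhi ^ 3) ^ (k - m) * gDel ^ m) := by
        unfold gW; rw [Finset.sum_range_succ]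
      rw [e, reflect_add, ih (by omega), reflect_C_mul]
      congr 2
      rw [show 6 * k = 6 * (k - m) + 6 * m by omega, reflect_mul _ _ (dP _) (dD _), hPhi, hDel]
  exact key _ le_rfl

open Polynomial in
theorem gW_natDegree (k : ℕ) (a : ℕ → ℚ) : (gW k a (k+1)).natDegree ≤ 6 * k := by
  unfold gW
  apply natDegree_sum_le_of_forall_le
  intro r hr
  have hr' : r ≤ k := by simp at hr; omega
  have d1 : gPhi.natDegree ≤ 2 := by unfold gPhi; compute_degree
  have d2 : gDel.natDegree ≤ 6 := by unfold gDel; compute_degree; omega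
  refine le_trans (natDegree_C_mul_le _ _) ?_
  refine le_trans natDegree_mul_le ?_
  rw [← pow_mul]
  have h1 : (gPhi ^ (3 * (k - r))).natDegree ≤ (3 * (k - r)) * 2 := le_trans natDegree_pow_le (Nat.mul_le_mul_left _ d1)
  have h2 : (gDel ^ r).natDegree ≤ r * 6 := le_trans natDegree_pow_le (Nat.mul_le_mul_left _ d2)
  omega

/-- The coefficients of the extremal formal weight enumerator. -/
theorem gW_coeff (k : ℕ) (a : ℕ → ℚ) (ha : Polynomial.X ^ (k+1) ∣ gW k a (k+1) - 1) (j : ℕ)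
    (hj : (gW k a (k+1)).coeff j ≠ 0) : j = 0 ∨ j = 6 * k ∨ (k + 1 ≤ j ∧ j + k + 1 ≤ 6 * k) := by
  have hle : j ≤ 6 * k := by
    by_contra h
    exact hj (Polynomial.coeff_eq_zero_of_natDegree_lt (lt_of_le_of_lt (gW_natDegree k a) (by omega)))
  have hz : ∀ i, i < k + 1 → i ≠ 0 → (gW k a (k+1)).coeff i = 0 := by
    intro i hi hi0
    have := (Polynomial.X_pow_dvd_iff.mp ha) i hi
    rw [Polynomial.coeff_sub, Polynomial.coeff_one, if_neg hi0, sub_zero] at this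
    exact this
  by_contra hcon
  push Not at hcon
  obtain ⟨h0, h6, hm⟩ := hcon
  by_cases h : j < k + 1
  · exact hj (hz j h h0)
  · have h2 := hm (by omega)
    apply hj
    rw [← gW_reflect, Polynomial.coeff_reflect, Polynomial.revAt_le hle]
    exact hz _ (by omega) (by omega)

theorem gW_coeff_zero (k : ℕ) (a : ℕ → ℚ) (ha : Polynomial.X ^ (k+1) ∣ gW k a (k+1) - 1) :
    (gW k a (k+1)).coeff 0 = 1 := by
  have := (Polynomial.X_pow_dvd_iff.mp ha) 0 (by omega)
  rw [Polynomial.coeff_sub, Polynomial.coeff_one_zero] at this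
  linarith

open Polynomial in
theorem gW_inv_aux {R : Type*} [CommRing R] (π : ℚ[X] →+* R) (k : ℕ) (a : ℕ → ℚ)
    (ha : X ^ (k+1) ∣ gW k a (k+1) - 1) (hs : (1 - π X) ^ (4 * k + 1) = 0) :
    2 ^ (12 * k) * π ((gW k a (k+1)).comp (X ^ 4)) = (1 + π X) ^ (24 * k) := by
  have hu : IsCoprime (1 + X : ℚ[X]) ((1 - X) ^ (4 * k + 1)) := by
    apply IsCoprime.pow_right
    refine ⟨C (1/2), C (1/2), ?_⟩
    have : (C (1/2) : ℚ[X]) * 2 = 1 := by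
      rw [show (2 : ℚ[X]) = C 2 from rfl, ← C_mul]; norm_num
    linear_combination this
  obtain ⟨u, v, huv⟩ := hu
  have hU : π u * (1 + π X) = 1 := by
    have := congrArg π huv
    simpa [map_add, map_mul, map_pow, hs] using this
  set t : R := (1 - π X) * π u with ht
  have hy : t * (1 + π X) = 1 - π X := by rw [ht, mul_assoc, hU, mul_one]
  -- the evaluation maps
  let f : ℚ[X] →+* R := π.comp (compRingHom (X ^ 4))
  let g : ℚ[X] →+* R := eval₂RingHom (π.comp C) (t ^ 4)
  have fC : ∀ c, f (C c) = g (C c) := by intro c; simp [f, g]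
  have fX : f X = π X ^ 4 := by simp [f]
  have gX : g X = t ^ 4 := by simp [g]
  have e1 : 16 * f gPhi = (1 + π X) ^ 8 * g gPhi := by
    simp only [gPhi, map_add, map_mul, map_pow, map_one, fX, gX, map_ofNat]
    have : (1 + π X) ^ 8 * (1 + 14 * t ^ 4 + (t ^ 4) ^ 2) =
      (1 + π X) ^ 8 + 14 * (1 + π X) ^ 4 * (t * (1 + π X)) ^ 4 + (t * (1 + π X)) ^ 8 := by ring
    rw [this, hy]
    ring
  have e2 : 16 ^ 3 * f gDel = (1 + π X) ^ 24 * g gDel := by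
    simp only [gDel, map_sub, map_mul, map_pow, map_one, fX, gX]
    have : (1 + π X) ^ 24 * (t ^ 4 * (1 - t ^ 4) ^ 4) =
      (1 + π X) ^ 4 * (t * (1 + π X)) ^ 4 * ((1 + π X) ^ 4 - (t * (1 + π X)) ^ 4) ^ 4 := by ring
    rw [this, hy]
    ring
  have e3 : 16 ^ (3 * k) * f (gW k a (k+1)) = (1 + π X) ^ (24 * k) * g (gW k a (k+1)) := by
    unfold gW
    rw [map_sum, map_sum, Finset.mul_sum, Finset.mul_sum]
    apply Finset.sum_congr rfl
    intro r hr
    have hr' : r ≤ k := by simp at hr; omega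
    obtain ⟨s, rfl⟩ := Nat.exists_eq_add_of_le hr'
    rw [Nat.add_sub_cancel_left]
    simp only [map_mul, map_pow, fC]
    have h1 : (16 * f gPhi) ^ (3 * s) * (16 ^ 3 * f gDel) ^ r =
      ((1 + π X) ^ 8 * g gPhi) ^ (3 * s) * ((1 + π X) ^ 24 * g gDel) ^ r := by rw [e1, e2]
    have h2 : (16 : R) ^ (3 * (r + s)) = 16 ^ (3 * s) * (16 ^ 3) ^ r := by
      rw [← pow_mul, ← pow_add]; congr 1; ring
    have h3 : (1 + π X) ^ (24 * (r + s)) = ((1 + π X) ^ 8) ^ (3 * s) * ((1 + π X) ^ 24) ^ r := by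
      rw [← pow_mul, ← pow_mul, ← pow_add]; congr 1; ring
    rw [h2, h3]
    simp only [mul_pow] at h1
    rw [← pow_mul (f gPhi), ← pow_mul (g gPhi)]
    linear_combination (g (C (a r))) * h1
  have e4 : g (gW k a (k+1)) = 1 := by
    obtain ⟨V, hV⟩ := ha
    have : gW k a (k+1) = 1 + X ^ (k+1) * V := by rw [← hV]; ring
    rw [this, map_add, map_one, map_mul, map_pow, gX, ← pow_mul,
      show 4 * (k + 1) = (4 * k + 1) + 3 by ring, pow_add, ht, mul_pow, hs]
    ring
  rw [e4, mul_one] at e3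
  rw [← e3, pow_mul, pow_mul]
  norm_num
  rfl

open Polynomial in
theorem gW_inv (k : ℕ) (a : ℕ → ℚ) (ha : X ^ (k+1) ∣ gW k a (k+1) - 1) :
    (1 - X : ℚ[X]) ^ (4 * k + 1) ∣
      2 ^ (12 * k) * (gW k a (k+1)).comp (X ^ 4) - (1 + X) ^ (24 * k) := by
  have := gW_inv_aux (Ideal.Quotient.mk (Ideal.span {(1 - X : ℚ[X]) ^ (4 * k + 1)})) k a ha ?_
  · rw [← Ideal.mem_span_singleton, ← Ideal.Quotient.eq_zero_iff_mem, map_sub, map_mul, map_pow,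
      map_pow, map_add, map_one, map_ofNat, this, sub_self]
  · rw [← map_one (Ideal.Quotient.mk _), ← map_sub, ← map_pow, Ideal.Quotient.eq_zero_iff_mem]
    exact Ideal.mem_span_singleton_self _


/-- Lagrange inversion step. -/
theorem lagrange_aux (v w : PowerSeries ℚ) (hvw : v * w = 1) (k r : ℕ) (hr : r ≤ k) :
    PowerSeries.coeff k (v ^ (k+1) * PowerSeries.derivative ℚ (PowerSeries.X ^ r * w ^ r)) = 0 := by
  obtain ⟨s, rfl⟩ := Nat.exists_eq_add_of_le hr
  rcases r with _ | r
  · simp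
  set D := PowerSeries.derivative ℚ with hD
  have hw : D w = - w ^ 2 * D v := by
    have h := congrArg D hvw
    rw [Derivation.leibniz, Derivation.map_one_eq_zero, smul_eq_mul, smul_eq_mul] at h
    linear_combination w * h - (D w) * hvw
  have e : v ^ (r + 1 + s + 1) * D (PowerSeries.X ^ (r+1) * w ^ (r+1)) =
      (PowerSeries.C ((r:ℚ) + 1)) *
        (PowerSeries.X ^ r * (v ^ (s+1) - PowerSeries.X * (v ^ s * D v))) := by
    have hp : v ^ (r+1) * w ^ (r+1) = 1 := by rw [← mul_pow, hvw, one_pow]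
    have hp2 : v ^ (r+2) * w ^ (r+2) = 1 := by rw [← mul_pow, hvw, one_pow]
    have hX : D PowerSeries.X = 1 := PowerSeries.derivative_X
    have hCr : (PowerSeries.C ((r:ℚ) + 1)) = (r : PowerSeries ℚ) + 1 := by simp
    rw [Derivation.leibniz, PowerSeries.derivative_pow, PowerSeries.derivative_pow, ← hD, hw, hX, hCr]
    simp only [smul_eq_mul, Nat.add_sub_cancel]
    push_cast
    linear_combination (-((r : PowerSeries ℚ) + 1) * PowerSeries.X ^ (r+1) * D v * v ^ s) * hp2
      + (((r : PowerSeries ℚ) + 1) * PowerSeries.X ^ r * v ^ (s+1)) * hp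
  rw [e, PowerSeries.coeff_C_mul, show r + 1 + s = (s + 1) + r by ring, PowerSeries.coeff_X_pow_mul,
    map_sub, PowerSeries.coeff_succ_X_mul]
  have h := PowerSeries.coeff_derivative (v ^ (s+1)) s
  rw [PowerSeries.derivative_pow, Nat.add_sub_cancel, mul_assoc,
    show ((s + 1 : ℕ) : PowerSeries ℚ) = PowerSeries.C ((s:ℚ) + 1) by simp,
    PowerSeries.coeff_C_mul] at h
  have h' : ((s : ℚ) + 1) ≠ 0 := by positivity
  have h2 : PowerSeries.coeff s (v ^ s * D v) = PowerSeries.coeff (s+1) (v ^ (s+1)) := by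
    apply mul_left_cancel₀ h'
    rw [h]; ring
  rw [h2]; ring

/-- Power series with nonnegative coefficients and positive constant term. -/
def NNPos (f : PowerSeries ℚ) : Prop :=
  (∀ n, 0 ≤ PowerSeries.coeff n f) ∧ 0 < PowerSeries.coeff 0 f

theorem NNPos.mul {f g : PowerSeries ℚ} (hf : NNPos f) (hg : NNPos g) : NNPos (f * g) := by
  refine ⟨fun n => ?_, ?_⟩
  · rw [PowerSeries.coeff_mul]
    exact Finset.sum_nonneg fun p _ => mul_nonneg (hf.1 _) (hg.1 _)
  · rw [PowerSeries.coeff_mul]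
    simpa using mul_pos hf.2 hg.2

theorem NNPos.pow {f : PowerSeries ℚ} (hf : NNPos f) (n : ℕ) : NNPos (f ^ n) := by
  induction n with
  | zero =>
    refine ⟨fun n => ?_, by simp⟩
    rw [pow_zero, PowerSeries.coeff_one]
    split_ifs <;> norm_num
  | succ n ih => rw [pow_succ]; exact ih.mul hf

theorem NNPos.coeff_pos {f g : PowerSeries ℚ} (hf : ∀ n, 0 < PowerSeries.coeff n f) (hg : NNPos g)
    (n : ℕ) : 0 < PowerSeries.coeff n (f * g) := by
  rw [PowerSeries.coeff_mul]
  apply Finset.sum_pos'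
  · exact fun p _ => mul_nonneg (hf _).le (hg.1 _)
  · exact ⟨(n, 0), by simp, mul_pos (hf _) hg.2⟩

theorem gW_coeff_succ_ne (k : ℕ) (hk : 0 < k) (a : ℕ → ℚ)
    (ha : Polynomial.X ^ (k+1) ∣ gW k a (k+1) - 1) : (gW k a (k+1)).coeff (k+1) ≠ 0 := by
  intro h0
  obtain ⟨V, hV⟩ : Polynomial.X ^ (k+2) ∣ gW k a (k+1) - 1 := by
    rw [Polynomial.X_pow_dvd_iff] at ha ⊢
    intro d hd
    by_cases h : d = k + 1
    · subst h
      rw [Polynomial.coeff_sub, h0, Polynomial.coeff_one, if_neg (by omega), sub_zero]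
    · exact ha d (by omega)
  set D := PowerSeries.derivative ℚ with hD
  set P : PowerSeries ℚ := (gPhi : PowerSeries ℚ) with hP
  set Q : PowerSeries ℚ := PowerSeries.mk 1 with hQ
  have hQ1 : Q * (1 - PowerSeries.X) = 1 := PowerSeries.mk_one_mul_one_sub_eq_one ℚ
  have hPform : P = 1 + 14 * PowerSeries.X + PowerSeries.X ^ 2 := by
    rw [hP, gPhi]
    have : ((14 : Polynomial ℚ) : PowerSeries ℚ) = 14 := by
      exact map_ofNat (Polynomial.coeToPowerSeries.ringHom (R := ℚ)) 14
    simp [this]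
  set i : PowerSeries ℚ := P⁻¹ with hi
  have hPi : P * i = 1 := by
    apply PowerSeries.mul_inv_cancel
    rw [hPform]; simp
  have hDi : D i = - i ^ 2 * D P := PowerSeries.derivative_inv' P
  set v := P ^ 3 * Q ^ 4 with hv
  set w := i ^ 3 * (1 - PowerSeries.X) ^ 4 with hw
  have hvw : v * w = 1 := by
    have : v * w = (P * i) ^ 3 * (Q * (1 - PowerSeries.X)) ^ 4 := by rw [hv, hw]; ring
    rw [this, hPi, hQ1]; ring
  have hdel : (gDel : PowerSeries ℚ) = PowerSeries.X * (1 - PowerSeries.X) ^ 4 := by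
    simp [gDel]
  have hsum : (gW k a (k+1) : PowerSeries ℚ) * i ^ (3 * k) =
      ∑ r ∈ range (k+1), PowerSeries.C (a r) * (PowerSeries.X ^ r * w ^ r) := by
    have hc : (gW k a (k+1) : PowerSeries ℚ) = ∑ r ∈ range (k+1),
        PowerSeries.C (a r) * ((P ^ 3) ^ (k - r) * (PowerSeries.X * (1 - PowerSeries.X) ^ 4) ^ r) := by
      rw [gW, ← Polynomial.coeToPowerSeries.ringHom_apply, map_sum]
      apply Finset.sum_congr rfl
      intro r _
      simp [hdel, hP]
    rw [hc, Finset.sum_mul]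
    apply Finset.sum_congr rfl
    intro r hr
    obtain ⟨s, rfl⟩ := Nat.exists_eq_add_of_le (show r ≤ k by simp at hr; omega)
    rw [Nat.add_sub_cancel_left, hw]
    have : (P * i) ^ (3 * s) = 1 := by rw [hPi, one_pow]
    have e3 : i ^ (3 * (r + s)) = i ^ (3 * s) * (i ^ 3) ^ r := by
      rw [← pow_mul, ← pow_add]; congr 1; ring
    rw [e3, mul_pow, mul_pow, ← pow_mul P]
    rw [mul_pow] at this
    linear_combination (PowerSeries.C (a r) * PowerSeries.X ^ r *
      ((1 - PowerSeries.X) ^ 4) ^ r * (i ^ 3) ^ r) * this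
  have hzero : PowerSeries.coeff k (v ^ (k+1) * D ((gW k a (k+1) : PowerSeries ℚ) * i ^ (3 * k))) = 0 := by
    rw [hsum, map_sum, Finset.mul_sum, map_sum]
    apply Finset.sum_eq_zero
    intro r hr
    have := lagrange_aux v w hvw k r (by simp at hr; omega)
    rw [Derivation.leibniz, PowerSeries.derivative_C, smul_zero, add_zero, smul_eq_mul,
      mul_left_comm, PowerSeries.coeff_C_mul, this, mul_zero]
  have hWV : (gW k a (k+1) : PowerSeries ℚ) = 1 + PowerSeries.X ^ (k+2) * (V : PowerSeries ℚ) := by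
    have : gW k a (k+1) = 1 + Polynomial.X ^ (k+2) * V := by rw [← hV]; ring
    rw [this]; simp
  have hX : D PowerSeries.X = 1 := PowerSeries.derivative_X
  obtain ⟨U, hU⟩ : ∃ U, v ^ (k+1) * D ((gW k a (k+1) : PowerSeries ℚ) * i ^ (3 * k)) =
      v ^ (k+1) * D (i ^ (3 * k)) + PowerSeries.X ^ (k+1) * U := by
    refine ⟨v ^ (k+1) * (PowerSeries.X * D ((V : PowerSeries ℚ) * i ^ (3 * k)) + ((k : PowerSeries ℚ) + 2) * ((V : PowerSeries ℚ) * i ^ (3 * k))), ?_⟩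
    rw [hWV, add_mul, one_mul, map_add, mul_assoc (PowerSeries.X ^ (k+2)), Derivation.leibniz,
      PowerSeries.derivative_pow PowerSeries.X, ← hD, hX]
    simp only [smul_eq_mul, show k + 2 - 1 = k + 1 by omega]
    push_cast
    ring
  have hmain : v ^ (k+1) * D (i ^ (3 * k)) =
      PowerSeries.C (-(3 * k : ℚ)) * (Q * (Q ^ (4 * k + 3) * (P ^ 2 * D P))) := by
    obtain ⟨l, rfl⟩ : ∃ l, k = l + 1 := ⟨k - 1, by omega⟩
    rw [PowerSeries.derivative_pow, ← hD, hDi, hv, show 3 * (l + 1) - 1 = 3 * l + 2 by omega]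
    have : (P * i) ^ (3 * l + 4) = 1 := by rw [hPi, one_pow]
    rw [mul_pow] at this
    have hc : PowerSeries.C (-(3 * ((l + 1 : ℕ)) : ℚ)) = - (3 * ((l : PowerSeries ℚ) + 1)) := by
      have h3 : (PowerSeries.C (3 : ℚ)) = 3 := map_ofNat PowerSeries.C 3
      simp [h3]
    rw [hc]
    push_cast
    linear_combination (- 3 * ((l : PowerSeries ℚ) + 1) * P ^ 2 * Q ^ (4 * l + 8) * D P) * this
  rw [hU, map_add, PowerSeries.coeff_X_pow_mul', if_neg (by omega), add_zero, hmain,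
    PowerSeries.coeff_C_mul] at hzero
  have hQp : ∀ n, 0 < PowerSeries.coeff n Q := by intro n; simp [hQ]
  have hQN : NNPos Q := ⟨fun n => (hQp n).le, hQp 0⟩
  have hPN : NNPos P := by
    rw [hP]
    refine ⟨fun n => ?_, by simp [gPhi]⟩
    rw [Polynomial.coeff_coe, gPhi]
    simp only [Polynomial.coeff_add, Polynomial.coeff_one, Polynomial.coeff_ofNat_mul,
      Polynomial.coeff_X, Polynomial.coeff_X_pow]
    split_ifs <;> norm_num
  have hDPN : NNPos (D P) := by
    refine ⟨fun n => ?_, ?_⟩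
    · rw [hD, PowerSeries.coeff_derivative]
      exact mul_nonneg (hPN.1 _) (by positivity)
    · rw [hD, PowerSeries.coeff_derivative, hP, Polynomial.coeff_coe, gPhi]
      simp [Polynomial.coeff_one, Polynomial.coeff_X_pow]
  have hpos := NNPos.coeff_pos hQp ((hQN.pow (4 * k + 3)).mul ((hPN.pow 2).mul hDPN)) k
  have hk' : (0 : ℚ) < k := by exact_mod_cast hk
  nlinarith

theorem hWt_eq_zero {n : ℕ} (u : Fin n → ZMod 2) (h : hWt u = 0) : u = 0 := by
  unfold hWt at h
  rw [Finset.card_eq_zero, Finset.filter_eq_empty_iff] at h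
  funext i
  simpa using h (mem_univ i)

theorem hWt_cast {n : ℕ} (u : Fin n → ZMod 2) : ∑ i, u i = (hWt u : ZMod 2) := by
  unfold hWt
  rw [Finset.card_filter]
  push_cast
  apply Finset.sum_congr rfl
  intro i _
  generalize u i = b
  revert b
  decide

theorem hWt_one_add {n : ℕ} (u : Fin n → ZMod 2) : hWt (1 + u) + hWt u = n := by
  have h := Finset.card_filter_add_card_filter_not (s := (univ : Finset (Fin n))) (fun i => u i = 0)
  rw [Finset.card_univ, Fintype.card_fin] at h
  have h1 : hWt (1 + u) = (univ.filter fun i => u i = 0).card := by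
    unfold hWt
    congr 1
    apply Finset.filter_congr
    intro i _
    simp only [Pi.add_apply, Pi.one_apply]
    generalize u i = b
    revert b
    decide
  rw [h1]
  exact h

open scoped Classical in
open Polynomial in
theorem wB_coeff {n : ℕ} (B : Submodule (ZMod 2) (Fin n → ZMod 2)) (j : ℕ) :
    (∑ c ∈ univ.filter (· ∈ B), (X : ℚ[X]) ^ hWt c).coeff j =
      (((univ.filter (· ∈ B)).filter (fun c => hWt c = j)).card : ℚ) := by
  rw [finsetSum_coeff, Finset.card_filter]
  push_cast
  apply Finset.sum_congr rfl
  intro c _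
  rw [coeff_X_pow]
  simp [eq_comm]

open scoped Classical in
open Polynomial in
/-- The binary core: a doubly even self-orthogonal code with large dual distance. -/
theorem core (k : ℕ) (hk : 0 < k) (B : Submodule (ZMod 2) (Fin (24 * k) → ZMod 2))
    (hde : DoublyEven (B : Set (Fin (24 * k) → ZMod 2)))
    (hso : (B : Set (Fin (24 * k) → ZMod 2)) ⊆ dual2 (B : Set (Fin (24 * k) → ZMod 2)))
    (hmin : ∀ u ∈ dual2 (B : Set (Fin (24 * k) → ZMod 2)), u ≠ 0 → 4 * k + 1 ≤ hWt u) :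
    (B : Set (Fin (24 * k) → ZMod 2)) = dual2 (B : Set (Fin (24 * k) → ZMod 2)) ∧
    minHam (B : Set (Fin (24 * k) → ZMod 2)) = 4 * k + 4 := by
  -- weights of B
  have hone : ∀ y ∈ B, 1 + y ∈ dual2 (B : Set (Fin (24 * k) → ZMod 2)) := by
    intro y hy z hz
    simp only [Pi.add_apply, Pi.one_apply, add_mul, one_mul, Finset.sum_add_distrib]
    rw [hso hy z hz, add_zero, hWt_cast, ZMod.natCast_eq_zero_iff]
    exact dvd_trans (by norm_num) (hde z hz)
  have hwt : ∀ c ∈ B, ∃ j, hWt c = 4 * j ∧ (j = 0 ∨ j = 6 * k ∨ (k + 1 ≤ j ∧ j + k + 1 ≤ 6 * k)) := by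
    intro c hc
    obtain ⟨j, hj⟩ := hde c hc
    refine ⟨j, hj, ?_⟩
    by_cases h0 : c = 0
    · left
      subst h0
      simp [hWt] at hj
      omega
    have h1 := hmin c (hso hc) h0
    have hs := hWt_one_add c
    by_cases h2 : 1 + c = 0
    · right; left
      rw [h2] at hs
      simp [hWt] at hs hj
      omega
    have h3 := hmin _ (hone c hc) h2
    right; right
    omega
  obtain ⟨a, ha⟩ := exists_gW k (k+1)
  set W := gW k a (k+1) with hW
  set N : ℕ := (univ.filter (· ∈ B)).card with hN
  set wB : ℚ[X] := ∑ c ∈ univ.filter (· ∈ B), X ^ hWt c with hwB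
  have hcB := wB_coeff B
  rw [← hwB] at hcB
  have hW4 : ∀ j, (W.comp (X ^ 4)).coeff j = if 4 ∣ j then W.coeff (j / 4) else 0 := by
    intro j
    rw [← expand_eq_comp_X_pow, coeff_expand (by norm_num)]
  set p : ℚ[X] := C (2 ^ (12 * k)) * wB - C (N : ℚ) * W.comp (X ^ 4) with hp
  have hdvd : (1 - X : ℚ[X]) ^ (4 * k + 1) ∣ p := by
    have h1 : (1 - X : ℚ[X]) ^ (4 * k + 1) ∣ 2 ^ (24 * k) * wB - C (N : ℚ) * (1 + X) ^ (24 * k) := by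
      rw [hwB, macw B, ← hN, ← mul_sub]
      apply Dvd.dvd.mul_left
      have h0 : (0 : Fin (24 * k) → ZMod 2) ∈
          univ.filter (· ∈ dual2 (B : Set (Fin (24 * k) → ZMod 2))) := by
        simp [dual2]
      have hz : hWt (0 : Fin (24 * k) → ZMod 2) = 0 := by simp [hWt]
      rw [← Finset.add_sum_erase _ _ h0, hz, pow_zero, mul_one, Nat.sub_zero, add_sub_cancel_left]
      apply Finset.dvd_sum
      intro u hu
      simp only [mem_erase, mem_filter, mem_univ, true_and] at hu
      exact Dvd.dvd.mul_left (pow_dvd_pow _ (hmin u hu.2 hu.1)) _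
    have h2 := (gW_inv k a ha).mul_left (C (N : ℚ))
    rw [← hW] at h2
    have h3 := (dvd_sub h1 h2).mul_left (C ((2 ^ (12 * k))⁻¹ : ℚ))
    have h2C : (2 : ℚ[X]) ^ (12 * k) = C (2 ^ (12 * k)) := by
      rw [C_pow]; rfl
    have hinv : C ((2 ^ (12 * k))⁻¹ : ℚ) * (2 : ℚ[X]) ^ (12 * k) = 1 := by
      rw [h2C, ← C_mul, inv_mul_cancel₀ (by positivity), C_1]
    convert h3 using 1
    rw [hp, ← h2C, show 24 * k = 12 * k + 12 * k by ring, pow_add]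
    linear_combination (- (2 : ℚ[X]) ^ (12 * k) * wB + C (N : ℚ) * W.comp (X ^ 4)) * hinv
  have hp0 : p = 0 := by
    apply eq_zero_of_sparse (4 * k + 1)
    · exact dvd_trans (pow_dvd_pow_of_dvd ⟨-1, by ring⟩ _) hdvd
    · have hsub : p.support ⊆ ({0, 6 * k} ∪ Finset.Icc (k+1) (5 * k - 1)).image (fun j => 4 * j) := by
        intro i hi
        have : wB.coeff i ≠ 0 ∨ (W.comp (X ^ 4)).coeff i ≠ 0 := by
          by_contra hcon
          push Not at hcon
          rw [mem_support_iff] at hi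
          apply hi
          rw [hp, coeff_sub, coeff_C_mul, coeff_C_mul, hcon.1, hcon.2]
          ring
        have hex : ∃ j, i = 4 * j ∧ (j = 0 ∨ j = 6 * k ∨ (k + 1 ≤ j ∧ j + k + 1 ≤ 6 * k)) := by
          rcases this with h | h
          · rw [hcB] at h
            have hne : ((univ.filter (· ∈ B)).filter (fun c => hWt c = i)).card ≠ 0 := by
              exact_mod_cast h
            obtain ⟨c, hc⟩ := Finset.card_ne_zero.mp hne
            simp only [mem_filter, mem_univ, true_and] at hc
            rw [← hc.2]
            exact hwt c hc.1
          · rw [hW4] at h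
            split_ifs at h with h4
            · exact ⟨i / 4, by omega, gW_coeff k a ha _ h⟩
            · exact absurd rfl h
        obtain ⟨j, rfl, hj⟩ := hex
        apply Finset.mem_image_of_mem
        simp only [mem_union, mem_insert, mem_singleton, mem_Icc]
        omega
      refine le_trans (Finset.card_le_card hsub) (le_trans Finset.card_image_le
        (le_trans (Finset.card_union_le _ _) ?_))
      rw [Nat.card_Icc]
      have := Finset.card_le_two (a := 0) (b := 6 * k)
      omega
  have hcoef : ∀ j, (2 : ℚ) ^ (12 * k) * wB.coeff j = N * (W.comp (X ^ 4)).coeff j := by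
    intro j
    have := congrArg (fun q => coeff q j) hp0
    simp only [hp, coeff_sub, coeff_C_mul, coeff_zero] at this
    linarith
  have hNval : (N : ℚ) = 2 ^ (12 * k) := by
    have h := hcoef 0
    rw [hcB, hW4, if_pos (by norm_num), Nat.zero_div, hW, gW_coeff_zero k a ha] at h
    have h1 : (univ.filter (· ∈ B)).filter (fun c => hWt c = 0) = {0} := by
      ext c
      simp only [mem_filter, mem_univ, true_and, mem_singleton]
      refine ⟨fun h => hWt_eq_zero c h.2, ?_⟩
      rintro rfl
      exact ⟨B.zero_mem, by simp [hWt]⟩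
    rw [h1] at h
    simp at h
    linarith
  have hNnat : N = 2 ^ (12 * k) := by exact_mod_cast hNval
  constructor
  · have hcard := card_mul_dual B
    have h24 : (2 : ℚ) ^ (24 * k) = 2 ^ (12 * k) * 2 ^ (12 * k) := by
      rw [← pow_add]; congr 1; ring
    rw [← hN, hNval, h24] at hcard
    have hd := mul_left_cancel₀ (by positivity) hcard
    have hd' : (univ.filter (· ∈ dual2 (B : Set (Fin (24 * k) → ZMod 2)))).card = 2 ^ (12 * k) := by
      exact_mod_cast hd.symm
    have hsub : univ.filter (· ∈ B) ⊆ univ.filter (· ∈ dual2 (B : Set (Fin (24 * k) → ZMod 2))) := by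
      intro c hc
      simp only [mem_filter, mem_univ, true_and] at hc ⊢
      exact hso hc
    have heq := Finset.eq_of_subset_of_card_le hsub (by rw [hd', ← hNnat])
    ext c
    have := Finset.ext_iff.mp heq c
    simpa using this
  · have h := hcoef (4 * (k + 1))
    rw [hW4, if_pos (by simp), Nat.mul_div_cancel_left _ (by norm_num), hcB, hNval] at h
    have h2 := mul_left_cancel₀ (by positivity) h
    have hne : ((univ.filter (· ∈ B)).filter (fun c => hWt c = 4 * (k + 1))).card ≠ 0 := by
      intro h0
      rw [h0] at h2
      exact gW_coeff_succ_ne k hk a ha (by rw [← hW, ← h2]; simp)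
    obtain ⟨c, hc⟩ := Finset.card_ne_zero.mp hne
    simp only [mem_filter, mem_univ, true_and] at hc
    have hmem : 4 * k + 4 ∈ {d | ∃ x ∈ (B : Set (Fin (24 * k) → ZMod 2)), x ≠ 0 ∧ hWt x = d} := by
      refine ⟨c, hc.1, ?_, by rw [hc.2]; ring⟩
      rintro rfl
      have := hc.2
      simp [hWt] at this
    apply le_antisymm
    · exact Nat.sInf_le hmem
    · apply le_csInf ⟨_, hmem⟩
      rintro d ⟨x, hx, hx0, rfl⟩
      have h1 := hmin x (hso hx) hx0
      obtain ⟨j, hj⟩ := hde x hx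
      omega

theorem res2_add {n : ℕ} (x y : Fin n → ZMod 4) : res2 (x + y) = res2 x + res2 y := by
  funext i; simp [res2]

/-- The residue code as a submodule. -/
def resB {n : ℕ} (C : Submodule (ZMod 4) (Fin n → ZMod 4)) :
    Submodule (ZMod 2) (Fin n → ZMod 2) where
  carrier := residue (C : Set (Fin n → ZMod 4))
  add_mem' := by
    rintro _ _ ⟨x, hx, rfl⟩ ⟨y, hy, rfl⟩
    exact ⟨x + y, C.add_mem hx hy, res2_add x y⟩
  zero_mem' := ⟨0, C.zero_mem, by funext i; simp [res2]⟩
  smul_mem' := by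
    rintro b _ ⟨x, hx, rfl⟩
    rcases (show b = 0 ∨ b = 1 by revert b; decide) with rfl | rfl
    · exact ⟨0, C.zero_mem, by funext i; simp [res2]⟩
    · exact ⟨x, hx, by simp⟩

/-- The embedding `ZMod 2 ≃ 2 ZMod 4`. -/
def dbl (b : ZMod 2) : ZMod 4 := if b = 0 then 0 else 2

theorem dbl_sum {α : Type*} (s : Finset α) (f : α → ZMod 2) :
    dbl (∑ i ∈ s, f i) = ∑ i ∈ s, dbl (f i) := by
  classical
  have hadd : ∀ a b, dbl (a + b) = dbl a + dbl b := by decide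
  induction s using Finset.induction_on with
  | empty => simp [dbl]
  | insert a s ha ih => rw [Finset.sum_insert ha, Finset.sum_insert ha, hadd, ih]

theorem main_aux (k : ℕ) (hk : 0 < k)
    (C : Submodule (ZMod 4) (Fin (24 * k) → ZMod 4)) (hsd : SelfDualZ4 C)
    (hlee : 8 * k + 2 ≤ minLee (C : Set (Fin (24 * k) → ZMod 4))) :
    residue (C : Set (Fin (24 * k) → ZMod 4)) =
        dual2 (residue (C : Set (Fin (24 * k) → ZMod 4))) ∧
    DoublyEven (residue (C : Set (Fin (24 * k) → ZMod 4))) ∧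
    minHam (residue (C : Set (Fin (24 * k) → ZMod 4))) = 4 * k + 4 := by
  have horth : ∀ x ∈ C, ∀ y ∈ C, ∑ i, x i * y i = 0 := by
    intro x hx
    have : x ∈ dualZ4 (C : Set (Fin (24 * k) → ZMod 4)) := by rw [← hsd]; exact hx
    exact this
  have hde : DoublyEven (residue (C : Set (Fin (24 * k) → ZMod 4))) := by
    rintro _ ⟨x, hx, rfl⟩
    have h := horth x hx x hx
    rw [← ZMod.natCast_eq_zero_iff, ← h]
    unfold hWt
    rw [Finset.card_filter]
    push_cast
    apply Finset.sum_congr rfl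
    intro i _
    unfold res2
    generalize x i = b
    revert b
    decide
  have hso : residue (C : Set (Fin (24 * k) → ZMod 4)) ⊆
      dual2 (residue (C : Set (Fin (24 * k) → ZMod 4))) := by
    rintro _ ⟨x, hx, rfl⟩ _ ⟨y, hy, rfl⟩
    have h := congrArg (ZMod.castHom (by norm_num : (2:ℕ) ∣ 4) (ZMod 2)) (horth x hx y hy)
    rw [map_sum, map_zero] at h
    simp only [map_mul] at h
    exact h
  have hmin : ∀ u ∈ dual2 (residue (C : Set (Fin (24 * k) → ZMod 4))), u ≠ 0 →
      4 * k + 1 ≤ hWt u := by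
    intro u hu hu0
    have hx : (fun i => dbl (u i)) ∈ (C : Set (Fin (24 * k) → ZMod 4)) := by
      rw [hsd]
      intro y hy
      have h := congrArg dbl (hu (res2 y) ⟨y, hy, rfl⟩)
      rw [dbl_sum] at h
      have h0 : dbl 0 = 0 := by decide
      rw [h0] at h
      rw [← h]
      apply Finset.sum_congr rfl
      intro i _
      unfold res2
      beta_reduce
      generalize u i = b
      generalize y i = c
      revert b c
      decide
    have hx0 : (fun i => dbl (u i)) ≠ 0 := by
      intro h
      apply hu0
      funext i
      have := congrFun h i
      simp only [Pi.zero_apply] at this ⊢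
      revert this
      generalize u i = b
      revert b
      decide
    have hw : leeWt (fun i => dbl (u i)) = 2 * hWt u := by
      unfold leeWt hWt
      rw [Finset.card_filter, Finset.mul_sum]
      apply Finset.sum_congr rfl
      intro i _
      beta_reduce
      generalize u i = b
      revert b
      decide
    have hle : minLee (C : Set (Fin (24 * k) → ZMod 4)) ≤ 2 * hWt u := by
      apply Nat.sInf_le
      exact ⟨_, hx, hx0, hw⟩
    omega
  have hcore := core k hk (resB C) hde hso hmin
  exact ⟨hcore.1, hde, hcore.2⟩

end Z4Note
open Z4Note in
/-- the residue code of a self-dual `ZMod 4`-code of length `24k` and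
minimum Lee weight `8k+4` or `8k+2` is a binary extremal doubly even self-dual code. -/
theorem residue_of_selfdual_Z4_length24k
    (k : ℕ) (hk : 0 < k)
    (C : Submodule (ZMod 4) (Fin (24 * k) → ZMod 4))
    (hsd : SelfDualZ4 C)
    (hlee : minLee (C : Set (Fin (24 * k) → ZMod 4)) = 8 * k + 4 ∨
            minLee (C : Set (Fin (24 * k) → ZMod 4)) = 8 * k + 2) :
    residue (C : Set (Fin (24 * k) → ZMod 4)) =
        dual2 (residue (C : Set (Fin (24 * k) → ZMod 4))) ∧
    DoublyEven (residue (C : Set (Fin (24 * k) → ZMod 4))) ∧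
    minHam (residue (C : Set (Fin (24 * k) → ZMod 4))) = 4 * k + 4 := by
  exact main_aux k hk C hsd (by omega)
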